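/- Let a < b be real numbers, let 0 < α < 1 and let n ≥ 1 be a natural number. Let g : ℕ → (ℝ → ℝ) be a sequence of functions such that for every i ≤ n, g_i is continuous on [a,b], for every i < n, g_i is differentiable with continuous derivative on [a,b] and g_{i+1}(t) = (1/Γ(1−α)) ∫_a^t (t−s)^(−α) g_i′(s) ds for all t ∈ [a,b] (i.e. g_{i+1} is the Caputo fractional derivative of order α of g_i). Define inductively H₀ = g_n and H_{j+1}(t) = (1/Γ(α)) ∫_a^t (t−s)^(α−1) H_j(s) ds. Then for every t ∈ [a,b], g₀(t) = Σ_{i=0}^{n−1} g_i(a) · (t−a)^(iα)/Γ(iα+1) + H_n(t). -/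

import Mathlib

/-!
Up to Gamma factors, the Riemann–Liouville integral `J^α` is convolution with a power function,
so Fubini's theorem and the beta integral give `J^α J^β = J^(α+β)`. The Caputo derivative is
`D^α f = J^(1-α) f'`, hence `J^α D^α f = J^1 f' = f - f a`: this is the expansion for `n = 1`. For
the induction, apply `J^α` to the expansion of `D^α f` of order `n`: it sends the power of exponent
`i α` to the power of exponent `(i + 1) α`, and adding `f a` yields the expansion of `f` of order
`n + 1`.
-/

open MeasureTheory ProbabilityTheory Set

section BetaIntegral

variable {p q r t : ℝ}

theorem integral_sub_rpow_mul_sub_rpow (hp : 0 < p) (hq : 0 < q) (hrt : r < t) :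
    ∫ s in r..t, (t - s) ^ (p - 1) * (s - r) ^ (q - 1) = beta p q * (t - r) ^ (p + q - 1) := by
  have hsub : 0 < t - r := sub_pos.2 hrt
  have hshift : ∫ s in r..t, (t - s) ^ (p - 1) * (s - r) ^ (q - 1) =
      ∫ x in (0 : ℝ)..(t - r), x ^ (p - 1) * (t - r - x) ^ (q - 1) := by
    simpa using intervalIntegral.integral_comp_sub_left (a := r) (b := t)
      (fun x => x ^ (p - 1) * (t - r - x) ^ (q - 1)) t
  rw [hshift]
  apply Complex.ofReal_injective
  calc ((∫ x in (0 : ℝ)..(t - r), x ^ (p - 1) * (t - r - x) ^ (q - 1) : ℝ) : ℂ)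
      = ∫ x in (0 : ℝ)..(t - r),
          (x : ℂ) ^ ((p : ℂ) - 1) * (((t - r : ℝ) : ℂ) - x) ^ ((q : ℂ) - 1) := by
        rw [← intervalIntegral.integral_ofReal]
        refine intervalIntegral.integral_congr fun x hx => ?_
        rw [uIcc_of_le hsub.le] at hx
        simp [Complex.ofReal_cpow hx.1, Complex.ofReal_cpow (sub_nonneg.2 hx.2)]
    _ = ((t - r : ℝ) : ℂ) ^ ((p : ℂ) + q - 1) * Complex.betaIntegral p q :=
        Complex.betaIntegral_scaled p q hsub
    _ = ((beta p q * (t - r) ^ (p + q - 1) : ℝ) : ℂ) := by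
        rw [Complex.betaIntegral_eq_Gamma_mul_div _ _ (by simpa) (by simpa), mul_comm, beta]
        simp only [← Complex.ofReal_add, Complex.Gamma_ofReal, Complex.ofReal_mul,
          Complex.ofReal_div, Complex.ofReal_cpow hsub.le, Complex.ofReal_sub, Complex.ofReal_one]

theorem intervalIntegrable_sub_rpow_mul_sub_rpow (hp : 0 < p) (hq : 0 < q) (hrt : r < t) :
    IntervalIntegrable (fun s => (t - s) ^ (p - 1) * (s - r) ^ (q - 1)) volume r t := by
  refine intervalIntegral.intervalIntegrable_of_integral_ne_zero ?_
  rw [integral_sub_rpow_mul_sub_rpow hp hq hrt]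
  exact (mul_pos (beta_pos hp hq) (Real.rpow_pos_of_pos (sub_pos.2 hrt) _)).ne'

end BetaIntegral

variable {E : Type*} [NormedAddCommGroup E] [NormedSpace ℝ E]
variable {a b t α β : ℝ} {f f₁ f₂ : ℝ → E}

/-- The Riemann–Liouville fractional integral `J^α f` of order `α` with base point `a`. -/
noncomputable def fractionalIntegral (α a : ℝ) (f : ℝ → E) (t : ℝ) : E :=
  (1 / Real.Gamma α) • ∫ s in a..t, (t - s) ^ (α - 1) • f s

/-- The Caputo derivative `D^α f = J^(1 - α) f'` with base point `a`, for orders `α ∈ (0, 1)`. -/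
noncomputable def caputoDeriv (α a : ℝ) (f : ℝ → E) : ℝ → E :=
  fractionalIntegral (1 - α) a (deriv f)

/-- Convergence at the point `t` of the integral that defines `J^α f t`. For `α < 1` the kernel
blows up at `t`, so this is a condition on each `t` separately and not just on `[a, t]`. -/
def FractionalIntegrable (α a : ℝ) (f : ℝ → E) (t : ℝ) : Prop :=
  IntervalIntegrable (fun s => (t - s) ^ (α - 1) • f s) volume a t

/-- The Taylor polynomial of order `n` in powers of `(t - a) ^ α`, where `c i` stands for the value
at `a` of the `i`-fold Caputo derivative. -/
noncomputable def fractionalTaylor (α a : ℝ) (c : ℕ → E) (n : ℕ) (t : ℝ) : E :=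
  ∑ i ∈ Finset.range n, ((t - a) ^ ((i : ℝ) * α) / Real.Gamma ((i : ℝ) * α + 1)) • c i

section FractionalIntegral

theorem fractionalIntegral_congr (hat : a ≤ t) (h : EqOn f₁ f₂ (Icc a t)) :
    fractionalIntegral α a f₁ t = fractionalIntegral α a f₂ t := by
  rw [fractionalIntegral, fractionalIntegral]
  congr 1
  refine intervalIntegral.integral_congr fun s hs => ?_
  rw [uIcc_of_le hat] at hs
  simp only [h hs]

theorem fractionalIntegral_one : fractionalIntegral 1 a f t = ∫ s in a..t, f s := by
  simp [fractionalIntegral]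

theorem fractionalIntegral_sub (h₁ : FractionalIntegrable α a f₁ t)
    (h₂ : FractionalIntegrable α a f₂ t) :
    fractionalIntegral α a (fun s => f₁ s - f₂ s) t =
      fractionalIntegral α a f₁ t - fractionalIntegral α a f₂ t := by
  simp only [fractionalIntegral, smul_sub, intervalIntegral.integral_sub h₁ h₂]

theorem fractionalIntegral_finset_sum {ι : Type*} {I : Finset ι} {F : ι → ℝ → E}
    (h : ∀ i ∈ I, FractionalIntegrable α a (F i) t) :
    fractionalIntegral α a (fun s => ∑ i ∈ I, F i s) t =
      ∑ i ∈ I, fractionalIntegral α a (F i) t := by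
  simp only [fractionalIntegral, Finset.smul_sum, intervalIntegral.integral_finsetSum h]

theorem fractionalIntegral_smul_const [CompleteSpace E] (φ : ℝ → ℝ) (c : E) :
    fractionalIntegral α a (fun s => φ s • c) t = fractionalIntegral α a φ t • c := by
  simp_rw [fractionalIntegral, ← smul_assoc]
  rw [intervalIntegral.integral_smul_const, smul_assoc]

theorem fractionalIntegral_rpow_div_Gamma (hα : 0 < α) (hβ : 0 ≤ β) (hat : a ≤ t) :
    fractionalIntegral α a (fun s => (s - a) ^ β / Real.Gamma (β + 1)) t =
      (t - a) ^ (β + α) / Real.Gamma (β + α + 1) := by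
  rcases hat.eq_or_lt with rfl | hlt
  · simp [fractionalIntegral, Real.zero_rpow (add_pos_of_nonneg_of_pos hβ hα).ne']
  have hβ1 : 0 < β + 1 := by positivity
  have hbeta := integral_sub_rpow_mul_sub_rpow hα hβ1 hlt
  rw [add_sub_cancel_right, beta, show α + (β + 1) = β + α + 1 by ring,
    add_sub_cancel_right] at hbeta
  have hΓα := (Real.Gamma_pos_of_pos hα).ne'
  have hΓβ := (Real.Gamma_pos_of_pos hβ1).ne'
  simp only [fractionalIntegral, smul_eq_mul, ← mul_div_assoc]
  rw [intervalIntegral.integral_div, hbeta]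
  field_simp

theorem eqOn_iterate_fractionalIntegral {H : ℕ → ℝ → E} (h0 : EqOn (H 0) f (Icc a b))
    (hsucc : ∀ j, EqOn (H (j + 1)) (fractionalIntegral α a (H j)) (Icc a b)) (n : ℕ) :
    EqOn (H n) ((fractionalIntegral α a)^[n] f) (Icc a b) := by
  induction n with
  | zero => exact h0
  | succ n ih =>
    intro t ht
    rw [Function.iterate_succ_apply', hsucc n ht]
    exact fractionalIntegral_congr ht.1 (ih.mono (Icc_subset_Icc_right ht.2))

end FractionalIntegral

namespace FractionalIntegrable

theorem congr (hf : FractionalIntegrable α a f₁ t) (hat : a ≤ t) (h : EqOn f₁ f₂ (Icc a t)) :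
    FractionalIntegrable α a f₂ t := by
  refine (intervalIntegrable_congr fun s hs => ?_).1 hf
  rw [uIoc_of_le hat] at hs
  simp only [h (Ioc_subset_Icc_self hs)]

theorem integrableOn (hf : FractionalIntegrable α a f t) (hat : a ≤ t) :
    IntegrableOn (fun s => (t - s) ^ (α - 1) • f s) (Ioc a t) :=
  (intervalIntegrable_iff_integrableOn_Ioc_of_le hat).1 hf

theorem of_continuousOn (hα : 0 < α) (hat : a ≤ t) (hf : ContinuousOn f (Icc a t)) :
    FractionalIntegrable α a f t := by
  rw [← uIcc_of_le hat] at hf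
  have hpow : IntervalIntegrable (fun s => (t - s) ^ (α - 1)) volume a t := by
    simpa using (intervalIntegral.intervalIntegrable_rpow' (a := t - a) (b := t - t)
      (r := α - 1) (by linarith)).comp_sub_left t
  exact hpow.smul_continuousOn hf

end FractionalIntegrable

section Semigroup

theorem ae_restrict_Ioc_mem_Ioo (a t : ℝ) : ∀ᵐ r ∂volume.restrict (Ioc a t), r ∈ Ioo a t := by
  rw [← restrict_Ioo_eq_restrict_Ioc]
  exact ae_restrict_mem measurableSet_Ioo

theorem FractionalIntegrable.aestronglyMeasurable (hf : FractionalIntegrable α a f t)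
    (hat : a ≤ t) : AEStronglyMeasurable f (volume.restrict (Ioc a t)) := by
  have hpow : Measurable fun r : ℝ => ((t - r) ^ (α - 1))⁻¹ := by fun_prop
  refine (hpow.aestronglyMeasurable.smul (hf.integrableOn hat).aestronglyMeasurable).congr ?_
  filter_upwards [ae_restrict_Ioc_mem_Ioo a t] with r hr
  exact inv_smul_smul₀ (Real.rpow_pos_of_pos (sub_pos.2 hr.2) _).ne' (f r)

/-- The kernel of `J^α J^β` up to Gamma factors. It is extended by zero off the triangle `r < s`, so
that Fubini's theorem can be applied on a square. -/
noncomputable def compKernel (α β t r s : ℝ) : ℝ :=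
  (Ioi r).indicator (fun s => (t - s) ^ (α - 1) * (s - r) ^ (β - 1)) s

variable {r s : ℝ}

theorem compKernel_nonneg (hs : s ≤ t) : 0 ≤ compKernel α β t r s := by
  refine indicator_apply_nonneg fun hrs => ?_
  exact mul_nonneg (Real.rpow_nonneg (sub_nonneg.2 hs) _)
    (Real.rpow_nonneg (sub_pos.2 (mem_Ioi.1 hrs)).le _)

theorem measurable_compKernel (α β t : ℝ) :
    Measurable fun x : ℝ × ℝ => compKernel α β t x.1 x.2 := by
  have h : (fun x : ℝ × ℝ => compKernel α β t x.1 x.2) =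
      {x : ℝ × ℝ | x.1 < x.2}.indicator
        fun x => (t - x.2) ^ (α - 1) * (x.2 - x.1) ^ (β - 1) := by
    ext x
    simp [compKernel, indicator_apply]
  rw [h]
  exact Measurable.indicator (by fun_prop) (measurableSet_lt measurable_fst measurable_snd)

theorem integrableOn_compKernel (hα : 0 < α) (hβ : 0 < β) (hr : r ∈ Ioo a t) :
    IntegrableOn (compKernel α β t r) (Ioc a t) := by
  have hkernel := (intervalIntegrable_iff_integrableOn_Ioc_of_le hr.2.le).1
    (intervalIntegrable_sub_rpow_mul_sub_rpow hα hβ hr.2)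
  unfold compKernel
  rwa [IntegrableOn, integrable_indicator_iff measurableSet_Ioi, IntegrableOn,
    Measure.restrict_restrict measurableSet_Ioi, inter_comm, Ioc_inter_Ioi, sup_of_le_right hr.1.le]

theorem setIntegral_compKernel (hα : 0 < α) (hβ : 0 < β) (hr : r ∈ Ioo a t) :
    ∫ s in Ioc a t, compKernel α β t r s = beta α β * (t - r) ^ (α + β - 1) := by
  unfold compKernel
  rw [setIntegral_indicator measurableSet_Ioi, Ioc_inter_Ioi, sup_of_le_right hr.1.le,
    ← intervalIntegral.integral_of_le hr.2.le, integral_sub_rpow_mul_sub_rpow hα hβ hr.2]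

theorem setIntegral_compKernel_smul (hs : s ∈ Ioc a t) :
    ∫ r in Ioc a t, compKernel α β t r s • f r =
      (t - s) ^ (α - 1) • ∫ r in a..s, (s - r) ^ (β - 1) • f r := by
  have hsection : (fun r => compKernel α β t r s • f r) =
      (Iio s).indicator fun r => (t - s) ^ (α - 1) • (s - r) ^ (β - 1) • f r := by
    ext r
    by_cases hrs : r < s <;> simp [compKernel, hrs, mul_smul]
  have hset : Ioc a t ∩ Iio s = Ioo a s := by
    ext r
    exact ⟨fun h => ⟨h.1.1, h.2⟩, fun h => ⟨⟨h.1, h.2.le.trans hs.2⟩, h.2⟩⟩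
  rw [hsection, setIntegral_indicator measurableSet_Iio, hset, ← integral_Ioc_eq_integral_Ioo,
    integral_smul, intervalIntegral.integral_of_le hs.1.le]

theorem integrable_compKernel_smul (hα : 0 < α) (hβ : 0 < β) (hat : a ≤ t)
    (hf : FractionalIntegrable (α + β) a f t) :
    Integrable (fun x : ℝ × ℝ => compKernel α β t x.1 x.2 • f x.1)
      ((volume.restrict (Ioc a t)).prod (volume.restrict (Ioc a t))) := by
  have hmeas : AEStronglyMeasurable (fun x : ℝ × ℝ => compKernel α β t x.1 x.2 • f x.1)
      ((volume.restrict (Ioc a t)).prod (volume.restrict (Ioc a t))) :=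
    (measurable_compKernel α β t).aestronglyMeasurable.smul (hf.aestronglyMeasurable hat).comp_fst
  refine (integrable_prod_iff hmeas).2 ⟨?_, ?_⟩
  · filter_upwards [ae_restrict_Ioc_mem_Ioo a t] with r hr
    exact (integrableOn_compKernel hα hβ hr).smul_const (f r)
  · refine ((hf.integrableOn hat).norm.const_mul (beta α β)).congr ?_
    filter_upwards [ae_restrict_Ioc_mem_Ioo a t] with r hr
    have hpow : 0 ≤ (t - r) ^ (α + β - 1) := Real.rpow_nonneg (sub_pos.2 hr.2).le _
    calc beta α β * ‖(t - r) ^ (α + β - 1) • f r‖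
        = (∫ s in Ioc a t, compKernel α β t r s) * ‖f r‖ := by
          rw [setIntegral_compKernel hα hβ hr, norm_smul, Real.norm_of_nonneg hpow, mul_assoc]
      _ = ∫ s in Ioc a t, ‖compKernel α β t r s • f r‖ := by
          rw [← integral_mul_const]
          refine setIntegral_congr_fun measurableSet_Ioc fun s hs => ?_
          simp only [norm_smul, Real.norm_of_nonneg (compKernel_nonneg hs.2)]

theorem FractionalIntegrable.fractionalIntegral (hα : 0 < α) (hβ : 0 < β) (hat : a ≤ t)
    (hf : FractionalIntegrable (α + β) a f t) :
    FractionalIntegrable α a (fractionalIntegral β a f) t := by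
  have hint := (integrable_compKernel_smul hα hβ hat hf).integral_prod_right
  rw [FractionalIntegrable, intervalIntegrable_iff_integrableOn_Ioc_of_le hat]
  refine (hint.smul (1 / Real.Gamma β)).congr ?_
  filter_upwards [ae_restrict_mem measurableSet_Ioc] with s hs
  simp only [Pi.smul_apply, setIntegral_compKernel_smul hs, _root_.fractionalIntegral]
  rw [smul_comm]

theorem fractionalIntegral_fractionalIntegral [CompleteSpace E] (hα : 0 < α) (hβ : 0 < β)
    (hat : a ≤ t) (hf : FractionalIntegrable (α + β) a f t) :
    fractionalIntegral α a (fractionalIntegral β a f) t = fractionalIntegral (α + β) a f t := by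
  have hswap : ∫ s in a..t, (t - s) ^ (α - 1) • ∫ r in a..s, (s - r) ^ (β - 1) • f r =
      beta α β • ∫ r in a..t, (t - r) ^ (α + β - 1) • f r := by
    rw [intervalIntegral.integral_of_le hat, intervalIntegral.integral_of_le hat]
    calc ∫ s in Ioc a t, (t - s) ^ (α - 1) • ∫ r in a..s, (s - r) ^ (β - 1) • f r
        = ∫ s in Ioc a t, ∫ r in Ioc a t, compKernel α β t r s • f r :=
          setIntegral_congr_fun measurableSet_Ioc fun s hs => (setIntegral_compKernel_smul hs).symm
      _ = ∫ r in Ioc a t, ∫ s in Ioc a t, compKernel α β t r s • f r :=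
          (integral_integral_swap (integrable_compKernel_smul hα hβ hat hf)).symm
      _ = ∫ r in Ioc a t, beta α β • (t - r) ^ (α + β - 1) • f r := by
          refine integral_congr_ae ?_
          filter_upwards [ae_restrict_Ioc_mem_Ioo a t] with r hr
          rw [integral_smul_const, setIntegral_compKernel hα hβ hr, mul_smul]
      _ = beta α β • ∫ r in Ioc a t, (t - r) ^ (α + β - 1) • f r := integral_smul _ _
  have hΓα := (Real.Gamma_pos_of_pos hα).ne'
  have hΓβ := (Real.Gamma_pos_of_pos hβ).ne'
  simp_rw [fractionalIntegral, smul_comm _ (1 / Real.Gamma β)]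
  rw [intervalIntegral.integral_smul, hswap, smul_smul, smul_smul, beta]
  congr 1
  field_simp

end Semigroup

section Caputo

theorem caputoDeriv_eq_integral {f' : ℝ → E} (hat : a ≤ t) (hf' : EqOn (deriv f) f' (Icc a t)) :
    caputoDeriv α a f t = (1 / Real.Gamma (1 - α)) • ∫ s in a..t, (t - s) ^ (-α) • f' s := by
  rw [caputoDeriv, fractionalIntegral_congr hat hf', fractionalIntegral, sub_sub_cancel_left]

theorem FractionalIntegrable.caputoDeriv (hα0 : 0 < α) (hα1 : α < 1) (hat : a ≤ t)
    (hf' : IntervalIntegrable (deriv f) volume a t) :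
    FractionalIntegrable α a (caputoDeriv α a f) t :=
  .fractionalIntegral hα0 (sub_pos.2 hα1) hat (by simpa [FractionalIntegrable] using hf')

theorem fractionalIntegral_caputoDeriv [CompleteSpace E] (hα0 : 0 < α) (hα1 : α < 1) (hat : a ≤ t)
    (hf : ContinuousOn f (Icc a t)) (hdiff : DifferentiableOn ℝ f (Ioo a t))
    (hf' : IntervalIntegrable (deriv f) volume a t) :
    fractionalIntegral α a (caputoDeriv α a f) t = f t - f a := by
  rw [caputoDeriv, fractionalIntegral_fractionalIntegral hα0 (sub_pos.2 hα1) hat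
    (by simpa [FractionalIntegrable] using hf'), add_sub_cancel, fractionalIntegral_one]
  exact intervalIntegral.integral_eq_sub_of_hasDerivAt_of_le hat hf
    (fun s hs => (hdiff.differentiableAt (isOpen_Ioo.mem_nhds hs)).hasDerivAt) hf'

end Caputo

section Taylor

variable (c : ℕ → E) (n : ℕ)

theorem continuous_sub_rpow_div_Gamma (hβ : 0 ≤ β) :
    Continuous fun t : ℝ => (t - a) ^ β / Real.Gamma (β + 1) :=
  ((continuous_id.sub continuous_const).rpow_const fun _ => .inr hβ).div_const _

theorem continuous_fractionalTaylor (hα : 0 ≤ α) : Continuous (fractionalTaylor α a c n) :=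
  continuous_finsetSum _ fun _ _ =>
    (continuous_sub_rpow_div_Gamma (by positivity)).smul continuous_const

theorem fractionalTaylor_succ [CompleteSpace E] (hα : 0 < α) (hat : a ≤ t) :
    fractionalTaylor α a c (n + 1) t =
      c 0 + fractionalIntegral α a (fractionalTaylor α a (fun i => c (i + 1)) n) t := by
  have hterm : ∀ i : ℕ, fractionalIntegral α a (fun s =>
      ((s - a) ^ ((i : ℝ) * α) / Real.Gamma ((i : ℝ) * α + 1)) • c (i + 1)) t =
      ((t - a) ^ (((i + 1 : ℕ) : ℝ) * α) / Real.Gamma (((i + 1 : ℕ) : ℝ) * α + 1)) • c (i + 1) :=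
    fun i => by
      rw [fractionalIntegral_smul_const, fractionalIntegral_rpow_div_Gamma hα (by positivity) hat,
        Nat.cast_succ, add_one_mul]
  have hint : ∀ i ∈ Finset.range n, FractionalIntegrable α a (fun s =>
      ((s - a) ^ ((i : ℝ) * α) / Real.Gamma ((i : ℝ) * α + 1)) • c (i + 1)) t := fun i _ =>
    .of_continuousOn hα hat
      ((continuous_sub_rpow_div_Gamma (by positivity)).smul continuous_const).continuousOn
  unfold fractionalTaylor
  rw [fractionalIntegral_finset_sum hint, Finset.sum_congr rfl fun i _ => hterm i,
    Finset.sum_range_succ', add_comm]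
  simp

end Taylor

theorem generalized_fractional_taylor_general [CompleteSpace E] (hα0 : 0 < α) (hα1 : α < 1)
    {n : ℕ} {g : ℕ → ℝ → E} (hcont : ∀ i < n, ContinuousOn (g i) (Icc a b))
    (hdiff : ∀ i < n, DifferentiableOn ℝ (g i) (Ioo a b))
    (hint : ∀ i < n, IntervalIntegrable (deriv (g i)) volume a b)
    (hcaputo : ∀ i < n, EqOn (g (i + 1)) (caputoDeriv α a (g i)) (Icc a b)) :
    EqOn (g 0) (fun t => fractionalTaylor α a (fun i => g i a) n t +
      (fractionalIntegral α a)^[n] (g n) t) (Icc a b) := by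
  induction n generalizing g with
  | zero => intro t _; simp [fractionalTaylor]
  | succ n ih =>
    intro t ht
    set T := fractionalTaylor α a (fun i => g (i + 1) a) n
    have hIcc : Icc a t ⊆ Icc a b := Icc_subset_Icc_right ht.2
    have hint0 : IntervalIntegrable (deriv (g 0)) volume a t :=
      (hint 0 n.succ_pos).mono_set (by rwa [uIcc_of_le ht.1, uIcc_of_le (ht.1.trans ht.2)])
    have hg1 : EqOn (caputoDeriv α a (g 0)) (g 1) (Icc a t) :=
      ((hcaputo 0 n.succ_pos).mono hIcc).symm
    have hg1_int : FractionalIntegrable α a (g 1) t :=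
      (FractionalIntegrable.caputoDeriv hα0 hα1 ht.1 hint0).congr ht.1 hg1
    have hincrement : fractionalIntegral α a (g 1) t = g 0 t - g 0 a := by
      rw [← fractionalIntegral_congr ht.1 hg1]
      exact fractionalIntegral_caputoDeriv hα0 hα1 ht.1 ((hcont 0 n.succ_pos).mono hIcc)
        ((hdiff 0 n.succ_pos).mono (Ioo_subset_Ioo_right ht.2)) hint0
    have htail : EqOn ((fractionalIntegral α a)^[n] (g (n + 1))) (fun s => g 1 s - T s)
        (Icc a t) := fun s hs => eq_sub_of_add_eq' (ih (g := fun i => g (i + 1))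
          (fun i hi => hcont _ (by lia)) (fun i hi => hdiff _ (by lia))
          (fun i hi => hint _ (by lia)) (fun i hi => hcaputo _ (by lia)) (hIcc hs)).symm
    have hremainder : (fractionalIntegral α a)^[n + 1] (g (n + 1)) t =
        g 0 t - g 0 a - fractionalIntegral α a T t := by
      rw [Function.iterate_succ_apply', fractionalIntegral_congr ht.1 htail,
        fractionalIntegral_sub hg1_int (.of_continuousOn hα0 ht.1
          (continuous_fractionalTaylor _ n hα0.le).continuousOn), hincrement]
    have hpolynomial : fractionalTaylor α a (fun i => g i a) (n + 1) t =
        g 0 a + fractionalIntegral α a T t := fractionalTaylor_succ _ n hα0 ht.1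
    simp only [hpolynomial, hremainder]
    abel

/-- Theorem 4.1, part I (crisp form): generalized fractional Taylor theorem.
If `g_{i+1}` is the Caputo fractional derivative of order `α` of `g_i` for `i < n`,
and `H_n` is the `n`-fold Riemann–Liouville fractional integral of order `α`
of `g_n`, then `g₀(t) = Σ_{i=0}^{n−1} g_i(a)·(t−a)^(iα)/Γ(iα+1) + H_n(t)`. -/
theorem generalized_fractional_taylor
    (a b α : ℝ) (hab : a < b) (hα0 : 0 < α) (hα1 : α < 1)
    (n : ℕ) (hn : 1 ≤ n)
    (g g' : ℕ → ℝ → ℝ)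
    (hgcont : ∀ i ≤ n, ContinuousOn (g i) (Set.Icc a b))
    (hgderiv : ∀ i < n, ∀ t ∈ Set.Icc a b, HasDerivAt (g i) (g' i t) t)
    (hg'cont : ∀ i < n, ContinuousOn (g' i) (Set.Icc a b))
    (hcaputo : ∀ i < n, ∀ t ∈ Set.Icc a b,
      g (i + 1) t = (1 / Real.Gamma (1 - α)) * ∫ s in a..t, (t - s) ^ (-α) * g' i s)
    (H : ℕ → ℝ → ℝ) (hH0 : H 0 = g n)
    (hH : ∀ j, ∀ t ∈ Set.Icc a b,
      H (j + 1) t = (1 / Real.Gamma α) * ∫ s in a..t, (t - s) ^ (α - 1) * H j s) :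
    ∀ t ∈ Set.Icc a b,
      g 0 t = (∑ i ∈ Finset.range n,
        g i a * (t - a) ^ ((i : ℝ) * α) / Real.Gamma ((i : ℝ) * α + 1)) + H n t := by
  have hderiv : ∀ i < n, EqOn (deriv (g i)) (g' i) (Icc a b) :=
    fun i hi s hs => (hgderiv i hi s hs).deriv
  have htaylor := generalized_fractional_taylor_general hα0 hα1
    (fun i hi => hgcont i hi.le)
    (fun i hi s hs =>
      (hgderiv i hi s (Ioo_subset_Icc_self hs)).differentiableAt.differentiableWithinAt)
    (fun i hi => ((hg'cont i hi).congr (hderiv i hi)).intervalIntegrable_of_Icc hab.le)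
    (fun i hi t ht => (hcaputo i hi t ht).trans (caputoDeriv_eq_integral ht.1
      ((hderiv i hi).mono (Icc_subset_Icc_right ht.2))).symm)
  have hremainder : EqOn (H n) ((fractionalIntegral α a)^[n] (g n)) (Icc a b) :=
    eqOn_iterate_fractionalIntegral (fun t _ => congrFun hH0 t) hH n
  intro t ht
  simp only [htaylor ht, hremainder ht, fractionalTaylor, smul_eq_mul, div_mul_eq_mul_div,
    mul_comm (g _ a)]
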